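/- Relation between the energies of ψ and ũ (Lemma 4.3): There exist positive constants ā and C, depending only on M, such that if |a| ≤ ā, ψ is smooth on the exterior Kerr region with finite T_χ energy and ψ, r∂_rψ and r∂_tψ tend to 0 as r → ∞ on each constant-t slice, and ũ = √(r²+a²)·ψ, then: (1) (global identity) E_{T_χ}[ψ](t) = Ẽ_{T_χ}[ũ](t) for every t; and (2) (local estimate) for any r₁ < r₂ in (r₊,∞) whose tortoise coordinates satisfy r_*(r₁) < −1 < 1 < r_*(r₂), ∫_{r₁}^{r₂}∫_{S²} (|P^t_{T_χ}[ψ]| + |ψ|²) sinθ dr dθ dφ ≤ C·∫_{r_*(r₁)}^{r_*(r₂)}∫_{S²} P̃^t_{T_χ}[ũ] sinθ dr_* dθ dφ. -/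

import Mathlib

/-!
Write `W = r² + a²` and `T_χ = ∂_t + h ∂_φ` with `h = χ ω_H`. The energy density of `ψ` is
`A + (1/2) Δ (∂_rψ)²`, where `A` (`angPart`) collects the `t`, `θ`, `φ` derivatives, and the
density of `ũ = √W ψ`, expressed as a density in `dr`, is
`A + (1/2) Δ (∂_rψ + rψ/W)² + (1/2) q ψ²` with `q = V W² / Δ`
(`momentum_eq`, `tmomentum_eq`).

For (1): the two densities differ by `∂_r F` with `F = (1/2) (Δ r / W) ψ²`
(`hasDerivAt_boundary`). Both densities and `ψ²` are integrable, so on almost every radial ray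
`∂_r F` and `ψ²` are integrable, and `|F| ≤ (r - r₊) ψ²`; this already forces `∫ ∂_r F = 0`
(`integral_Ioi_deriv_eq_zero`).

For (2): when `|a| ≤ M/100` the quantity `A` is nonnegative (`angPart_nonneg`). The condition
`r_*(r₁) < -1` gives `r₁ < 3M`, and then
`A + (1/2) Δ (∂_rψ)² + ψ² + 4 ∂_r((r - r₁) ψ²)` is pointwise at most `40` times the density of `ũ`
(`pointwise_hardy`). The total derivative integrates to `4 (r₂ - r₁) ψ(r₂)² ≥ 0` on every ray.
-/

noncomputable section

open MeasureTheory Filter Topology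

namespace KerrPaper

abbrev V4 : Type := Fin 4 → ℝ

/-- Partial derivative in the `i`-th coordinate (coordinates: 0 = t, 1 = r, 2 = θ, 3 = φ). -/
def pd (i : Fin 4) (ψ : V4 → ℝ) : V4 → ℝ :=
  fun x => deriv (fun s => ψ (Function.update x i s)) (x i)

def rplus (M a : ℝ) : ℝ := M + Real.sqrt (M ^ 2 - a ^ 2)

def Δk (M a r : ℝ) : ℝ := r ^ 2 - 2 * M * r + a ^ 2

def SigK (a r θ : ℝ) : ℝ := r ^ 2 + a ^ 2 * Real.cos θ ^ 2

def PiK (M a r θ : ℝ) : ℝ := (r ^ 2 + a ^ 2) ^ 2 - a ^ 2 * Real.sin θ ^ 2 * Δk M a r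

def ωH (M a : ℝ) : ℝ := a / (rplus M a ^ 2 + a ^ 2)

/-- The exterior region in Boyer–Lindquist coordinates `(t, r, θ, φ)`. -/
def ext (M a : ℝ) : Set V4 := {x | rplus M a < x 1 ∧ 0 < x 2 ∧ x 2 < Real.pi}

/-- The Carter operator. -/
def carterQ (a : ℝ) (ψ : V4 → ℝ) : V4 → ℝ :=
  fun x =>
    (Real.sin (x 2))⁻¹ * pd 2 (fun y => Real.sin (y 2) * pd 2 ψ y) x +
      Real.cos (x 2) ^ 2 / Real.sin (x 2) ^ 2 * pd 3 (pd 3 ψ) x +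
      a ^ 2 * Real.sin (x 2) ^ 2 * pd 0 (pd 0 ψ) x

/-- The operator ℛ(r; M, a; ∂_t, ∂_φ, Q). -/
def curlyR (M a : ℝ) (ψ : V4 → ℝ) : V4 → ℝ :=
  fun x =>
    -((x 1 ^ 2 + a ^ 2) ^ 2) * pd 0 (pd 0 ψ) x - 4 * a * M * x 1 * pd 0 (pd 3 ψ) x +
      (Δk M a (x 1) - a ^ 2) * pd 3 (pd 3 ψ) x + Δk M a (x 1) * carterQ a ψ x

/-- The (rescaled) wave operator □ = Σ ∇^α∇_α. -/
def box (M a : ℝ) (ψ : V4 → ℝ) : V4 → ℝ :=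
  fun x => pd 1 (fun y => Δk M a (y 1) * pd 1 ψ y) x + (Δk M a (x 1))⁻¹ * curlyR M a ψ x

/-- ψ is a smooth solution of the wave equation on the exterior region. -/
def IsWaveSol (M a : ℝ) (ψ : V4 → ℝ) : Prop :=
  ContDiffOn ℝ (⊤ : ℕ∞) ψ (ext M a) ∧ ∀ x ∈ ext M a, box M a ψ x = 0

/-- G^{αβ} = Σ g^{αβ}, the rescaled inverse Kerr metric in BL coordinates. -/
def Ginv (M a r θ : ℝ) : Matrix (Fin 4) (Fin 4) ℝ :=
  !![-(PiK M a r θ) / Δk M a r, 0, 0, -(2 * a * M * r) / Δk M a r;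
     0, Δk M a r, 0, 0;
     0, 0, 1, 0;
     -(2 * a * M * r) / Δk M a r, 0, 0,
       (Δk M a r - a ^ 2 * Real.sin θ ^ 2) / (Δk M a r * Real.sin θ ^ 2)]

/-- The momentum P_X^α[ψ]. -/
def momentum (M a : ℝ) (X : V4 → Fin 4 → ℝ) (ψ : V4 → ℝ) (α : Fin 4) : V4 → ℝ :=
  fun x =>
    -(∑ γ, Ginv M a (x 1) (x 2) α γ * pd γ ψ x) * (∑ β, pd β ψ x * X x β) +
      (1 / 2) * X x α * ∑ ρ, ∑ σ, Ginv M a (x 1) (x 2) ρ σ * pd ρ ψ x * pd σ ψ x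

/-- Parameter domain of a constant-t slice: (r, θ, φ). -/
def sliceSet (M a : ℝ) : Set (ℝ × ℝ × ℝ) :=
  Set.Ioi (rplus M a) ×ˢ Set.Ioo 0 Real.pi ×ˢ Set.Ioo 0 (2 * Real.pi)

def pt (t : ℝ) (p : ℝ × ℝ × ℝ) : V4 := ![t, p.1, p.2.1, p.2.2]

/-- The energy E_X[ψ](t) = ∫ P_X^t[ψ] sinθ dr dθ dφ. -/
def energy (M a : ℝ) (X : V4 → Fin 4 → ℝ) (ψ : V4 → ℝ) (t : ℝ) : ℝ :=
  ∫ p in sliceSet M a, momentum M a X ψ 0 (pt t p) * Real.sin p.2.1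

/-- χ is a smooth nonincreasing cutoff, ≡ 1 for r ≤ 10M and ≡ 0 for r ≥ 11M. -/
def IsCutoff (M : ℝ) (χ : ℝ → ℝ) : Prop :=
  ContDiff ℝ (⊤ : ℕ∞) χ ∧ Antitone χ ∧ (∀ r ≤ 10 * M, χ r = 1) ∧ ∀ r, 11 * M ≤ r → χ r = 0

/-- The blended vector field T_χ = ∂_t + χ ω_H ∂_φ. -/
def Tchi (M a : ℝ) (χ : ℝ → ℝ) : V4 → Fin 4 → ℝ :=
  fun x => ![1, 0, 0, χ (x 1) * ωH M a]

/-- Triples (n_t, n_φ, n_Q) with n_t + n_φ + 2 n_Q ≤ n, indexing ∪_{i ≤ n} 𝕊_i. -/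
def symTriples (n : ℕ) : Finset (ℕ × ℕ × ℕ) :=
  (Finset.range (n + 1) ×ˢ Finset.range (n + 1) ×ˢ Finset.range (n + 1)).filter
    fun m => m.1 + m.2.1 + 2 * m.2.2 ≤ n

/-- The symmetry operator ∂_t^{n_t} ∂_φ^{n_φ} Q^{n_Q}. -/
def symOp (a : ℝ) (m : ℕ × ℕ × ℕ) (ψ : V4 → ℝ) : V4 → ℝ :=
  (pd 0)^[m.1] ((pd 3)^[m.2.1] ((carterQ a)^[m.2.2] ψ))

/-- The order-(n+1) energy E^{n+1}_X[ψ](t) = Σ_{i=0}^{n} Σ_{S ∈ 𝕊_i} E_X[Sψ](t). -/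
def energyUpTo (M a : ℝ) (X : V4 → Fin 4 → ℝ) (n : ℕ) (ψ : V4 → ℝ) (t : ℝ) : ℝ :=
  ∑ m ∈ symTriples n, energy M a X (symOp a m ψ) t

/-- The pointwise norm ‖ψ‖_n². -/
def ptNormSq (a : ℝ) (n : ℕ) (ψ : V4 → ℝ) : V4 → ℝ :=
  fun x => ∑ m ∈ symTriples n, (symOp a m ψ x) ^ 2

/-- The pointwise norm ‖∇̸ψ‖_n². -/
def angNormSq (a : ℝ) (n : ℕ) (ψ : V4 → ℝ) : V4 → ℝ :=
  fun x => ∑ m ∈ symTriples n,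
    ((pd 2 (symOp a m ψ) x) ^ 2 + (Real.sin (x 2) ^ 2)⁻¹ * (pd 3 (symOp a m ψ) x) ^ 2)

def energyIntegrable (M a : ℝ) (X : V4 → Fin 4 → ℝ) (ψ : V4 → ℝ) (t : ℝ) : Prop :=
  IntegrableOn (fun p => momentum M a X ψ 0 (pt t p) * Real.sin p.2.1) (sliceSet M a)

def energyFiniteUpTo (M a : ℝ) (X : V4 → Fin 4 → ℝ) (n : ℕ) (ψ : V4 → ℝ) : Prop :=
  ∀ t : ℝ, ∀ m ∈ symTriples n, energyIntegrable M a X (symOp a m ψ) t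

/-! Transformed (tortoise-coordinate) quantities. -/

/-- Tortoise coordinate: dr/dr_* = Δ/(r²+a²), r_*(3M) = 0. -/
def rstar (M a r : ℝ) : ℝ := ∫ s in (3 * M)..r, (s ^ 2 + a ^ 2) / Δk M a s

/-- Ñ² where Ñ⁻² = 1 − a² sin²θ Δ/(r²+a²)². -/
def Ntilde2 (M a r θ : ℝ) : ℝ :=
  (1 - a ^ 2 * Real.sin θ ^ 2 * Δk M a r / (r ^ 2 + a ^ 2) ^ 2)⁻¹

def VQ (M a r : ℝ) : ℝ := Δk M a r / (r ^ 2 + a ^ 2) ^ 2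

/-- The potential V of the transformed wave equation. -/
def Vpot (M a r : ℝ) : ℝ :=
  Δk M a r * (2 * M * r ^ 3 + r ^ 2 * a ^ 2 - 4 * M * r * a ^ 2 + a ^ 4) / (r ^ 2 + a ^ 2) ^ 4

/-- Partial derivatives in the (t, r_*, θ, φ) coordinates, acting on functions
parameterized by BL coordinates; ∂_{r_*} = (Δ/(r²+a²)) ∂_r. -/
def tpd (M a : ℝ) (i : Fin 4) (u : V4 → ℝ) : V4 → ℝ :=
  fun x => if i = 1 then Δk M a (x 1) / (x 1 ^ 2 + a ^ 2) * pd 1 u x else pd i u x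

/-- G̃^{αβ} = (ΣΔ/(r²+a²)²) g^{αβ} in (t, r_*, θ, φ) coordinates. -/
def Gtilde (M a r θ : ℝ) : Matrix (Fin 4) (Fin 4) ℝ :=
  !![-(PiK M a r θ) / (r ^ 2 + a ^ 2) ^ 2, 0, 0, -(2 * a * M * r) / (r ^ 2 + a ^ 2) ^ 2;
     0, 1, 0, 0;
     0, 0, VQ M a r, 0;
     -(2 * a * M * r) / (r ^ 2 + a ^ 2) ^ 2, 0, 0,
       (Δk M a r - a ^ 2 * Real.sin θ ^ 2) / ((r ^ 2 + a ^ 2) ^ 2 * Real.sin θ ^ 2)]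

/-- The transformed momentum P̃^α_{(X,q)}[ũ]. -/
def tmomentum (M a : ℝ) (X : V4 → Fin 4 → ℝ) (q : V4 → ℝ) (u : V4 → ℝ) (α : Fin 4) :
    V4 → ℝ :=
  fun x =>
    -(∑ γ, Gtilde M a (x 1) (x 2) α γ * tpd M a γ u x) * (∑ β, tpd M a β u x * X x β) +
      (1 / 2) * X x α *
        ((∑ ρ, ∑ σ, Gtilde M a (x 1) (x 2) ρ σ * tpd M a ρ u x * tpd M a σ u x) +
          Vpot M a (x 1) * u x ^ 2) +
      ∑ β, Gtilde M a (x 1) (x 2) α β *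
        (-(q x) * tpd M a β u x * u x + (1 / 2) * tpd M a β q x * u x ^ 2)

/-- The transformed energy Ẽ_{(X,q)}[ũ](t) = ∫ P̃^t sinθ dr_* dθ dφ (as an r-integral). -/
def tenergy (M a : ℝ) (X : V4 → Fin 4 → ℝ) (q : V4 → ℝ) (u : V4 → ℝ) (t : ℝ) : ℝ :=
  ∫ p in sliceSet M a,
    tmomentum M a X q u 0 (pt t p) * Real.sin p.2.1 * ((p.1 ^ 2 + a ^ 2) / Δk M a p.1)

def zeroFn : V4 → ℝ := fun _ => 0

def tenergyUpTo (M a : ℝ) (X : V4 → Fin 4 → ℝ) (q : V4 → ℝ) (n : ℕ) (u : V4 → ℝ)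
    (t : ℝ) : ℝ :=
  ∑ m ∈ symTriples n, tenergy M a X q (symOp a m u) t

def tenergyIntegrable (M a : ℝ) (X : V4 → Fin 4 → ℝ) (q : V4 → ℝ) (u : V4 → ℝ)
    (t : ℝ) : Prop :=
  IntegrableOn
    (fun p => tmomentum M a X q u 0 (pt t p) * Real.sin p.2.1 * ((p.1 ^ 2 + a ^ 2) / Δk M a p.1))
    (sliceSet M a)

def tenergyFiniteUpTo (M a : ℝ) (X : V4 → Fin 4 → ℝ) (q : V4 → ℝ) (n : ℕ)
    (u : V4 → ℝ) : Prop :=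
  ∀ t : ℝ, ∀ m ∈ symTriples n, tenergyIntegrable M a X q (symOp a m u) t

/-- The vector field K = (t² + r_*² + 1) T_χ + 2 t r_* Ñ² ∂_{r_*}, in tilde coordinates. -/
def Kvec (M a : ℝ) (χ : ℝ → ℝ) : V4 → Fin 4 → ℝ :=
  fun x =>
    ![x 0 ^ 2 + rstar M a (x 1) ^ 2 + 1,
      2 * x 0 * rstar M a (x 1) * Ntilde2 M a (x 1) (x 2),
      0,
      (x 0 ^ 2 + rstar M a (x 1) ^ 2 + 1) * (χ (x 1) * ωH M a)]

def qK (M a : ℝ) : V4 → ℝ := fun x => x 0 * (Ntilde2 M a (x 1) (x 2) - 1)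

/-- T_⊥ = ∂_t + (2aMr/Π) ∂_φ. -/
def Tperp (M a : ℝ) : V4 → Fin 4 → ℝ :=
  fun x => ![1, 0, 0, 2 * a * M * x 1 / PiK M a (x 1) (x 2)]

/-- The future unit normal n = (Π/(ΣΔ))^{1/2} T_⊥ of the constant-t slices. -/
def normalVF (M a : ℝ) : V4 → Fin 4 → ℝ :=
  fun x i =>
    Real.sqrt (PiK M a (x 1) (x 2) / (SigK a (x 1) (x 2) * Δk M a (x 1))) * Tperp M a x i

/-- ũ = √(r² + a²) ψ. -/
def utilde (a : ℝ) (ψ : V4 → ℝ) : V4 → ℝ := fun x => Real.sqrt (x 1 ^ 2 + a ^ 2) * ψ x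

/-- The transformed wave operator ∂_{r_*}² + (r²+a²)⁻² ℛ − V. -/
def tbox (M a : ℝ) (u : V4 → ℝ) : V4 → ℝ :=
  fun x =>
    tpd M a 1 (tpd M a 1 u) x + ((x 1 ^ 2 + a ^ 2) ^ 2)⁻¹ * curlyR M a u x -
      Vpot M a (x 1) * u x

def IsTWaveSol (M a : ℝ) (u : V4 → ℝ) : Prop :=
  ContDiffOn ℝ (⊤ : ℕ∞) u (ext M a) ∧ ∀ x ∈ ext M a, tbox M a u x = 0

/-- The Kerr metric (lower indices) in BL coordinates. -/
def gBL (M a r θ : ℝ) : Matrix (Fin 4) (Fin 4) ℝ :=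
  !![-(1 - 2 * M * r / SigK a r θ), 0, 0, -(2 * a * M * r * Real.sin θ ^ 2 / SigK a r θ);
     0, SigK a r θ / Δk M a r, 0, 0;
     0, 0, SigK a r θ, 0;
     -(2 * a * M * r * Real.sin θ ^ 2 / SigK a r θ), 0, 0,
       PiK M a r θ * Real.sin θ ^ 2 / SigK a r θ]

/-- The Kerr metric (lower indices) in (t, r_*, θ, φ) coordinates. -/
def gTl (M a r θ : ℝ) : Matrix (Fin 4) (Fin 4) ℝ :=
  !![-(1 - 2 * M * r / SigK a r θ), 0, 0, -(2 * a * M * r * Real.sin θ ^ 2 / SigK a r θ);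
     0, SigK a r θ * Δk M a r / (r ^ 2 + a ^ 2) ^ 2, 0, 0;
     0, 0, SigK a r θ, 0;
     -(2 * a * M * r * Real.sin θ ^ 2 / SigK a r θ), 0, 0,
       PiK M a r θ * Real.sin θ ^ 2 / SigK a r θ]

def quadForm (g : Matrix (Fin 4) (Fin 4) ℝ) (X Y : Fin 4 → ℝ) : ℝ :=
  ∑ i, ∑ j, g i j * X i * Y j

/-! Null geodesics. -/

def gBLinv (M a r θ : ℝ) : Matrix (Fin 4) (Fin 4) ℝ := (SigK a r θ)⁻¹ • Ginv M a r θ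

def vel (γ : ℝ → V4) (s : ℝ) (i : Fin 4) : ℝ := deriv (fun u => γ u i) s

def christoffel (M a : ℝ) (x : V4) (k i j : Fin 4) : ℝ :=
  (1 / 2) * ∑ l, gBLinv M a (x 1) (x 2) k l *
    (pd i (fun y => gBL M a (y 1) (y 2) l j) x + pd j (fun y => gBL M a (y 1) (y 2) l i) x -
      pd l (fun y => gBL M a (y 1) (y 2) i j) x)

/-- r admits an orbiting null geodesic: there is a (nonconstant) null geodesic of the Kerr
metric remaining at that constant value of r in the exterior region. -/
def IsOrbitingNullGeodesicRadius (M a r : ℝ) : Prop :=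
  ∃ γ : ℝ → V4,
    (∀ i, ContDiff ℝ (⊤ : ℕ∞) fun s => γ s i) ∧ (∀ s, γ s ∈ ext M a) ∧ (∀ s, γ s 1 = r) ∧
      (∃ s i, vel γ s i ≠ 0) ∧
      (∀ s, quadForm (gBL M a (γ s 1) (γ s 2)) (vel γ s) (vel γ s) = 0) ∧
      ∀ s k, deriv (fun u => vel γ u k) s +
        ∑ i, ∑ j, christoffel M a (γ s) k i j * vel γ s i * vel γ s j = 0

/-! Morawetz (symmetry-indexed) quantities. -/

/-- Coefficients ℛ^a of ℛ in the basis 𝕊₂ = {∂_t², ∂_t∂_φ, ∂_φ², Q}. -/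
def Rcoef (M a r : ℝ) : Fin 4 → ℝ :=
  ![-((r ^ 2 + a ^ 2) ^ 2), -(4 * a * M * r), Δk M a r - a ^ 2, Δk M a r]

/-- Coefficients ℒ^a of ℒ = ∂_t² + ∂_φ² + Q in the basis 𝕊₂. -/
def Lcoef : Fin 4 → ℝ := ![1, 0, 1, 1]

/-- The second-order symmetry operators S_a ∈ 𝕊₂. -/
def symS (a : ℝ) (c : Fin 4) (ψ : V4 → ℝ) : V4 → ℝ :=
  if c = 0 then pd 0 (pd 0 ψ)
  else if c = 1 then pd 0 (pd 3 ψ)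
  else if c = 2 then pd 3 (pd 3 ψ)
  else carterQ a ψ

/-- The coefficient matrices S_a^{αβ} with S_a = μ⁻¹ ∂_α (μ S_a^{αβ} ∂_β). -/
def Smat (a : ℝ) (c : Fin 4) (θ : ℝ) : Matrix (Fin 4) (Fin 4) ℝ :=
  if c = 0 then !![1, 0, 0, 0; 0, 0, 0, 0; 0, 0, 0, 0; 0, 0, 0, 0]
  else if c = 1 then !![0, 0, 0, 1 / 2; 0, 0, 0, 0; 0, 0, 0, 0; 1 / 2, 0, 0, 0]
  else if c = 2 then !![0, 0, 0, 0; 0, 0, 0, 0; 0, 0, 0, 0; 0, 0, 0, 1]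
  else
    !![a ^ 2 * Real.sin θ ^ 2, 0, 0, 0; 0, 0, 0, 0; 0, 0, 1, 0;
       0, 0, 0, Real.cos θ ^ 2 / Real.sin θ ^ 2]

/-- ℒ^{αβ} = Σ_c ℒ^c S_c^{αβ}. -/
def Lmat (a : ℝ) (θ : ℝ) : Matrix (Fin 4) (Fin 4) ℝ :=
  fun α β => ∑ c, Lcoef c * Smat a c θ α β

/-- ℛ̃′^a = ∂_r (z₁ Δ⁻¹ ℛ^a). -/
def Rtp (M a : ℝ) (z₁ : ℝ → ℝ) (c : Fin 4) (r : ℝ) : ℝ :=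
  deriv (fun s => z₁ s * (Δk M a s)⁻¹ * Rcoef M a s c) r

/-- ℛ̃̃″^a = ∂_r (z₂ z₁^{1/2} Δ^{−1/2} ℛ̃′^a). -/
def Rtpp (M a : ℝ) (z₁ z₂ : ℝ → ℝ) (c : Fin 4) (r : ℝ) : ℝ :=
  deriv (fun s => z₂ s * Real.sqrt (z₁ s) * (Real.sqrt (Δk M a s))⁻¹ * Rtp M a z₁ c s) r

/-- 𝒜^a = z₁^{1/2} Δ^{3/2} (−ℛ̃̃″^a). -/
def Acoef (M a : ℝ) (z₁ z₂ : ℝ → ℝ) (c : Fin 4) (r : ℝ) : ℝ :=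
  Real.sqrt (z₁ r) * (Δk M a r * Real.sqrt (Δk M a r)) * (-(Rtpp M a z₁ z₂ c r))

/-- 𝒰^{cd} = (1/2) z₂ ℛ̃′^c ℛ̃′^d. -/
def Ucoef (M a : ℝ) (z₁ z₂ : ℝ → ℝ) (c d : Fin 4) (r : ℝ) : ℝ :=
  (1 / 2) * z₂ r * Rtp M a z₁ c r * Rtp M a z₁ d r

/-- 𝒱^a = (1/4) ∂_r (Δ ∂_r (z₁ ∂_r (z₂ ℛ̃′^a))). -/
def Vcoef (M a : ℝ) (z₁ z₂ : ℝ → ℝ) (c : Fin 4) (r : ℝ) : ℝ :=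
  (1 / 4) *
    deriv (fun s =>
      Δk M a s * deriv (fun w => z₁ w * deriv (fun v => z₂ v * Rtp M a z₁ c v) w) s) r

/-- The r-component of the Morawetz vector field A^{ab} = z₁ z₂ ℛ̃′^{(a} ℒ^{b)} ∂_r. -/
def AvecR (M a : ℝ) (z₁ z₂ : ℝ → ℝ) (i j : Fin 4) (r : ℝ) : ℝ :=
  z₁ r * z₂ r * ((1 / 2) * (Rtp M a z₁ i r * Lcoef j + Rtp M a z₁ j r * Lcoef i))

/-- The Morawetz scalars q_A^{ab}. -/
def qA (M a : ℝ) (z₁ z₂ : ℝ → ℝ) (i j : Fin 4) (r : ℝ) : ℝ :=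
  (1 / 2) * deriv (AvecR M a z₁ z₂ i j) r -
    (1 / 2) * deriv z₁ r * z₂ r *
      ((1 / 2) * (Rtp M a z₁ i r * Lcoef j + Rtp M a z₁ j r * Lcoef i))

/-- The symmetry-indexed Morawetz momentum P_A^α[ψ]. -/
def morMomentum (M a : ℝ) (z₁ z₂ : ℝ → ℝ) (ψ : V4 → ℝ) (α : Fin 4) : V4 → ℝ :=
  fun x => ∑ i, ∑ j,
    (-(∑ γ, Ginv M a (x 1) (x 2) α γ * pd γ (symS a i ψ) x) * pd 1 (symS a j ψ) x *
        AvecR M a z₁ z₂ i j (x 1) +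
      (1 / 2) * (if α = 1 then AvecR M a z₁ z₂ i j (x 1) else 0) *
        (∑ ρ, ∑ σ, Ginv M a (x 1) (x 2) ρ σ * pd ρ (symS a i ψ) x * pd σ (symS a j ψ) x) +
      ∑ β, Ginv M a (x 1) (x 2) α β *
        (-(qA M a z₁ z₂ i j (x 1)) * pd β (symS a i ψ) x * symS a j ψ x +
          (1 / 2) * pd β (fun y => qA M a z₁ z₂ i j (y 1)) x * symS a i ψ x * symS a j ψ x))

/-- The first boundary current P∂₁^α[ψ]. -/
def morBoundary1 (M a : ℝ) (z₁ z₂ : ℝ → ℝ) (ψ : V4 → ℝ) (α : Fin 4) : V4 → ℝ :=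
  fun x => ∑ i, ∑ j, ∑ β,
    (Ucoef M a z₁ z₂ i j (x 1) * Lmat a (x 2) α β -
        ∑ c, (1 / 2) *
          (Ucoef M a z₁ z₂ c i (x 1) * Lcoef j + Ucoef M a z₁ z₂ c j (x 1) * Lcoef i) *
          Smat a c (x 2) α β) *
      symS a i ψ x * pd β (symS a j ψ) x

/-! Surface energies. -/

def pdR (f : ℝ × ℝ × ℝ → ℝ) (p : ℝ × ℝ × ℝ) : ℝ := deriv (fun s => f (s, p.2)) p.1

def pdTh (f : ℝ × ℝ × ℝ → ℝ) (p : ℝ × ℝ × ℝ) : ℝ :=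
  deriv (fun s => f (p.1, s, p.2.2)) p.2.1

def pdPh (f : ℝ × ℝ × ℝ → ℝ) (p : ℝ × ℝ × ℝ) : ℝ :=
  deriv (fun s => f (p.1, p.2.1, s)) p.2.2

/-- Flux of the transformed momentum through the graph t = f(r_*, θ, φ)
(f given as a function of (r, θ, φ), with ∂_{r_*} f = (Δ/(r²+a²)) ∂_r f). -/
def tsurfEnergy (M a : ℝ) (X : V4 → Fin 4 → ℝ) (q : V4 → ℝ) (u : V4 → ℝ)
    (f : ℝ × ℝ × ℝ → ℝ) : ℝ :=
  ∫ p in sliceSet M a,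
    (tmomentum M a X q u 0 (pt (f p) p) -
        Δk M a p.1 / (p.1 ^ 2 + a ^ 2) * pdR f p * tmomentum M a X q u 1 (pt (f p) p) -
        pdTh f p * tmomentum M a X q u 2 (pt (f p) p) -
        pdPh f p * tmomentum M a X q u 3 (pt (f p) p)) *
      Real.sin p.2.1 * ((p.1 ^ 2 + a ^ 2) / Δk M a p.1)

def tsurfEnergyIntegrable (M a : ℝ) (X : V4 → Fin 4 → ℝ) (q : V4 → ℝ) (u : V4 → ℝ)
    (f : ℝ × ℝ × ℝ → ℝ) : Prop :=
  IntegrableOn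
    (fun p =>
      (tmomentum M a X q u 0 (pt (f p) p) -
          Δk M a p.1 / (p.1 ^ 2 + a ^ 2) * pdR f p * tmomentum M a X q u 1 (pt (f p) p) -
          pdTh f p * tmomentum M a X q u 2 (pt (f p) p) -
          pdPh f p * tmomentum M a X q u 3 (pt (f p) p)) *
        Real.sin p.2.1 * ((p.1 ^ 2 + a ^ 2) / Δk M a p.1))
    (sliceSet M a)

/-! ### A radial integration lemma -/

/-- If `F'` and `f` are integrable on `(r₀, ∞)` and `|F| ≤ (r - r₀) f`, then `∫ F' = 0`.
After the substitution `r = r₀ + e^s` the bound says that `F` itself is integrable on `ℝ`,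
which forces it to vanish at both ends. -/
lemma integral_Ioi_deriv_eq_zero {r0 : ℝ} {f F F' : ℝ → ℝ}
    (hder : ∀ r, r0 < r → HasDerivAt F (F' r) r)
    (hF' : IntegrableOn F' (Set.Ioi r0)) (hf : IntegrableOn f (Set.Ioi r0))
    (hb : ∀ r, r0 < r → |F r| ≤ (r - r0) * f r) :
    ∫ r in Set.Ioi r0, F' r = 0 := by
  have himg : (fun s : ℝ => r0 + Real.exp s) '' Set.univ = Set.Ioi r0 := by
    ext r
    simp only [Set.image_univ, Set.mem_range, Set.mem_Ioi]
    constructor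
    · rintro ⟨s, rfl⟩
      linarith [Real.exp_pos s]
    · intro h
      exact ⟨Real.log (r - r0), by rw [Real.exp_log (by linarith)]; ring⟩
  have hd : ∀ s ∈ (Set.univ : Set ℝ),
      HasDerivWithinAt (fun s : ℝ => r0 + Real.exp s) (Real.exp s) Set.univ s := fun s _ =>
    ((Real.hasDerivAt_exp s).const_add r0).hasDerivWithinAt
  have hinj : Set.InjOn (fun s : ℝ => r0 + Real.exp s) Set.univ := by
    intro x _ y _ h
    exact Real.exp_injective (by simpa using h)
  rw [← himg] at hF' hf ⊢
  rw [integrableOn_image_iff_integrableOn_abs_deriv_smul MeasurableSet.univ hd hinj,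
    integrableOn_univ] at hF' hf
  rw [integral_image_eq_integral_abs_deriv_smul MeasurableSet.univ hd hinj, setIntegral_univ]
  have hpos : ∀ s : ℝ, r0 < r0 + Real.exp s := fun s => by linarith [Real.exp_pos s]
  have hG : ∀ s : ℝ, HasDerivAt (fun s => F (r0 + Real.exp s))
      (|Real.exp s| • F' (r0 + Real.exp s)) s := by
    intro s
    have := (hder _ (hpos s)).comp s ((Real.hasDerivAt_exp s).const_add r0)
    rw [abs_of_pos (Real.exp_pos s), smul_eq_mul, mul_comm]
    exact this
  refine integral_eq_zero_of_hasDerivAt_of_integrable hG hF' ?_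
  refine hf.mono' ?_ (Eventually.of_forall fun s => ?_)
  · exact (continuous_iff_continuousAt.2 fun s => (hG s).continuousAt).aestronglyMeasurable
  · have := hb _ (hpos s)
    simpa [abs_of_pos (Real.exp_pos s)] using this

/-! ### The horizon function -/

lemma rplus_facts {M a : ℝ} (hM : 0 < M) (ha : |a| ≤ M / 100) :
    M ≤ rplus M a ∧ rplus M a ≤ 2 * M ∧
      rplus M a ^ 2 + a ^ 2 = 2 * M * rplus M a ∧ a ^ 2 ≤ M ^ 2 / 10000 := by
  have ha2 : a ^ 2 ≤ M ^ 2 / 10000 := by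
    have := sq_le_sq' (by linarith [abs_nonneg a] : -(M / 100) ≤ |a|) ha
    rw [sq_abs] at this
    linarith
  have hs := Real.sqrt_nonneg (M ^ 2 - a ^ 2)
  have hs2 := Real.sq_sqrt (show 0 ≤ M ^ 2 - a ^ 2 by nlinarith [sq_nonneg M])
  have hs3 : Real.sqrt (M ^ 2 - a ^ 2) ≤ M := by
    rw [Real.sqrt_le_left hM.le]; nlinarith [sq_nonneg a]
  refine ⟨by unfold rplus; linarith, by unfold rplus; linarith, ?_, ha2⟩
  unfold rplus
  nlinarith

lemma sq_sub_rplus_le {M a r : ℝ} (hM : 0 < M) (ha : |a| ≤ M / 100) (hr : rplus M a < r) :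
    (r - rplus M a) ^ 2 ≤ Δk M a r := by
  obtain ⟨h1, h2, h3, h4⟩ := rplus_facts hM ha
  unfold Δk
  nlinarith

lemma Δk_pos {M a r : ℝ} (hM : 0 < M) (ha : |a| ≤ M / 100) (hr : rplus M a < r) :
    0 < Δk M a r :=
  lt_of_lt_of_le (by have := sub_pos.2 hr; positivity) (sq_sub_rplus_le hM ha hr)

lemma Δk_mul_le {M a r : ℝ} (hM : 0 < M) (ha : |a| ≤ M / 100) (hr : rplus M a < r) :
    Δk M a r * r / (r ^ 2 + a ^ 2) ≤ r - rplus M a := by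
  obtain ⟨h1, h2, h3, h4⟩ := rplus_facts hM ha
  have hr0 : 0 < r := by linarith
  rw [div_le_iff₀ (by positivity)]
  have : Δk M a r = (r - rplus M a) * (r - (2 * M - rplus M a)) := by unfold Δk; nlinarith
  rw [this]
  nlinarith [mul_nonneg (sub_pos.2 hr).le
    (show 0 ≤ r * (2 * M - rplus M a) + a ^ 2 by
      have := mul_nonneg hr0.le (sub_nonneg.2 h2); positivity)]

lemma lt_of_rstar_lt {M a r : ℝ} (hM : 0 < M) (ha : |a| ≤ M / 100)
    (h : rstar M a r < -1) : r < 3 * M := by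
  by_contra! hr
  obtain ⟨h1, h2, h3, h4⟩ := rplus_facts hM ha
  have : 0 ≤ rstar M a r := by
    unfold rstar
    refine intervalIntegral.integral_nonneg hr fun s hs => ?_
    have := Δk_pos hM ha (show rplus M a < s by linarith [hs.1])
    positivity
  linarith

/-! ### Pointwise coercivity -/

/-- The part of the `t`-component of the momentum of `∂_t + h ∂_φ` that involves the derivatives
`T = ∂_tψ`, `Θ = ∂_θψ`, `P = ∂_φψ`; the rest is `(1/2) Δ (∂_rψ)²`. The same expression occurs
in the transformed momentum, since `√(r² + a²)` depends on `r` only. -/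
def angPart (M a h r θ T Θ P : ℝ) : ℝ :=
  PiK M a r θ / (2 * Δk M a r) * T ^ 2 + h * (PiK M a r θ / Δk M a r) * T * P +
    ((1 / 2) * ((Δk M a r - a ^ 2 * Real.sin θ ^ 2) / (Δk M a r * Real.sin θ ^ 2)) +
      h * (2 * a * M * r) / Δk M a r) * P ^ 2 + Θ ^ 2 / 2

/-- The inequality that makes the coefficient of `(∂_φψ)²` nonnegative. For `r ≤ 10M` the left
side is `O(a²) Δ`, because `∂_t + ω_H ∂_φ` is null on the horizon; for `10M < r < 11M` it is
`O(a²)` while `Δ ≥ 80M²`; for `r ≥ 11M` it is `a²`. -/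
lemma cutoff_ineq {M a r : ℝ} (hM : 0 < M) (ha : |a| ≤ M / 100) (hr : rplus M a < r)
    {χ : ℝ → ℝ} (hχ : IsCutoff M χ) :
    a ^ 2 - 4 * a * M * r * (χ r * ωH M a) + (r ^ 2 + a ^ 2) ^ 2 * (χ r * ωH M a) ^ 2
      ≤ Δk M a r := by
  obtain ⟨h1, h2, h3, h4⟩ := rplus_facts hM ha
  have hr0 : 0 < r := by linarith
  obtain ⟨-, hanti, hone, hzero⟩ := hχ
  set R := rplus M a with hR
  have hR0 : 0 < R := by linarith
  have hω : ωH M a = a / (2 * M * R) := by rw [ωH, ← hR, h3]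
  have hω2 : ωH M a ^ 2 ≤ a ^ 2 / (4 * M ^ 4) := by
    rw [hω, div_pow]
    gcongr
    nlinarith [mul_pos hM hM, mul_self_le_mul_self hM.le h1]
  have haω : 0 ≤ a * ωH M a := by
    rw [hω, ← mul_div_assoc]; have := mul_self_nonneg a; positivity
  have hD := sq_sub_rplus_le hM ha hr
  rw [← hR] at hD
  have hD0 := Δk_pos hM ha hr
  rcases le_or_gt r (10 * M) with h10 | h10
  · rw [hone r h10, one_mul]
    have e : a ^ 2 - 4 * a * M * r * ωH M a + (r ^ 2 + a ^ 2) ^ 2 * ωH M a ^ 2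
        = ωH M a ^ 2 * (4 * M ^ 2 * (r - R) ^ 2 + Δk M a r * (Δk M a r + 4 * M * r)) := by
      rw [hω, Δk]; field_simp; ring
    rw [e]
    have hDle : Δk M a r ≤ 100 * M ^ 2 := by unfold Δk; nlinarith
    calc ωH M a ^ 2 * (4 * M ^ 2 * (r - R) ^ 2 + Δk M a r * (Δk M a r + 4 * M * r))
        ≤ a ^ 2 / (4 * M ^ 4) * (4 * M ^ 2 * Δk M a r +
            Δk M a r * (100 * M ^ 2 + 4 * M * (10 * M))) := by
          have : 0 ≤ ωH M a ^ 2 := sq_nonneg _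
          gcongr
      _ = (36 * a ^ 2 / M ^ 2) * Δk M a r := by field_simp; ring
      _ ≤ 1 * Δk M a r := by
          gcongr
          rw [div_le_one (by positivity)]; nlinarith
      _ = Δk M a r := one_mul _
  · rcases le_or_gt (11 * M) r with h11 | h11
    · rw [hzero r h11]; unfold Δk; nlinarith
    · have hc0 : 0 ≤ χ r := by rw [← hzero (11 * M) le_rfl]; exact hanti h11.le
      have hc1 : χ r ≤ 1 := by rw [← hone (10 * M) le_rfl]; exact hanti h10.le
      have e1 : 0 ≤ 4 * a * M * r * (χ r * ωH M a) := by
        have : 4 * a * M * r * (χ r * ωH M a) = 4 * M * r * χ r * (a * ωH M a) := by ring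
        rw [this]; positivity
      have e2 : (χ r * ωH M a) ^ 2 ≤ a ^ 2 / (4 * M ^ 4) := by
        rw [mul_pow]
        calc χ r ^ 2 * ωH M a ^ 2 ≤ 1 * (a ^ 2 / (4 * M ^ 4)) := by
              gcongr; exact pow_le_one₀ hc0 hc1
          _ = _ := one_mul _
      have e3 : r ^ 2 + a ^ 2 ≤ 122 * M ^ 2 := by nlinarith
      have e4 : (r ^ 2 + a ^ 2) ^ 2 * (χ r * ωH M a) ^ 2 ≤ 3721 * a ^ 2 := by
        calc (r ^ 2 + a ^ 2) ^ 2 * (χ r * ωH M a) ^ 2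
            ≤ (122 * M ^ 2) ^ 2 * (a ^ 2 / (4 * M ^ 4)) := by gcongr
          _ = 3721 * a ^ 2 := by field_simp; ring
      have e5 : 80 * M ^ 2 ≤ Δk M a r := by unfold Δk; nlinarith
      nlinarith

lemma angPart_nonneg {M a r θ : ℝ} (hM : 0 < M) (ha : |a| ≤ M / 100) (hr : rplus M a < r)
    (hθ : 0 < Real.sin θ) {χ : ℝ → ℝ} (hχ : IsCutoff M χ) (T Θ P : ℝ) :
    0 ≤ angPart M a (χ r * ωH M a) r θ T Θ P := by
  have hc := cutoff_ineq hM ha hr hχ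
  have hD := Δk_pos hM ha hr
  obtain ⟨h1, h2, h3, h4⟩ := rplus_facts hM ha
  have hr0 : 0 < r := by linarith
  set h := χ r * ωH M a
  have hs1 : Real.sin θ ^ 2 ≤ 1 := Real.sin_sq_le_one θ
  have hs0 : 0 < Real.sin θ ^ 2 := by positivity
  have hPi0 : 0 ≤ PiK M a r θ := by
    have : a ^ 2 * Real.sin θ ^ 2 * Δk M a r ≤ (r ^ 2 + a ^ 2) * (r ^ 2 + a ^ 2) := by
      gcongr
      · nlinarith [sq_nonneg a, sq_nonneg r]
      · unfold Δk; nlinarith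
    unfold PiK; nlinarith
  have hPi1 : PiK M a r θ ≤ (r ^ 2 + a ^ 2) ^ 2 := by
    unfold PiK
    have : 0 ≤ a ^ 2 * Real.sin θ ^ 2 * Δk M a r := by positivity
    linarith
  -- Completing the square in `∂_tψ + h ∂_φψ`.
  have e : angPart M a h r θ T Θ P = PiK M a r θ / (2 * Δk M a r) * (T + h * P) ^ 2 +
      (Δk M a r - Real.sin θ ^ 2 * (a ^ 2 - 4 * a * M * r * h + PiK M a r θ * h ^ 2)) /
        (2 * Δk M a r * Real.sin θ ^ 2) * P ^ 2 + Θ ^ 2 / 2 := by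
    unfold angPart
    field_simp
    ring
  rw [e]
  have hB : 0 ≤ Δk M a r -
      Real.sin θ ^ 2 * (a ^ 2 - 4 * a * M * r * h + PiK M a r θ * h ^ 2) := by
    have : a ^ 2 - 4 * a * M * r * h + PiK M a r θ * h ^ 2 ≤ Δk M a r := by
      nlinarith [mul_le_mul_of_nonneg_right hPi1 (sq_nonneg h)]
    nlinarith [mul_le_mul_of_nonneg_left this hs0.le]
  positivity

/-- A pointwise Hardy inequality, with `y = ψ` and `z = ∂_rψ`. The term
`4 (y² + 2 (r - r₁) y z)` is `4 ∂_r((r - r₁) ψ²)`; it supplies the coercivity in `ψ²` at large `r`,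
where the potential alone only controls `ψ² / r`. Since `(r - r₁)² ≤ Δ`, the weight costs
nothing near the horizon. -/
lemma pointwise_hardy {M a r r₁ A y : ℝ} (hM : 0 < M) (ha : |a| ≤ M / 100)
    (h1 : rplus M a < r₁) (h2 : r₁ < r) (h3 : r₁ < 3 * M) (hA : 0 ≤ A) (z : ℝ) :
    A + (1 / 2) * Δk M a r * z ^ 2 + y ^ 2 + 4 * (y ^ 2 + 2 * (r - r₁) * (y * z)) ≤
      40 * (A + (1 / 2) * Δk M a r * (z + r * y / (r ^ 2 + a ^ 2)) ^ 2 +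
        (1 / 2) * ((2 * M * r ^ 3 + r ^ 2 * a ^ 2 - 4 * M * r * a ^ 2 + a ^ 4) /
          (r ^ 2 + a ^ 2) ^ 2) * y ^ 2) := by
  obtain ⟨g1, g2, g3, g4⟩ := rplus_facts hM ha
  have hr0 : 0 < r := by linarith
  have hD0 := Δk_pos hM ha (h1.trans h2)
  have hD := sq_sub_rplus_le hM ha (h1.trans h2)
  have hD1 : (r - r₁) ^ 2 ≤ Δk M a r := by nlinarith
  set W := r ^ 2 + a ^ 2 with hW
  have hW0 : 0 < W := by positivity
  have hrM : M ≤ r := by linarith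
  set q := (2 * M * r ^ 3 + r ^ 2 * a ^ 2 - 4 * M * r * a ^ 2 + a ^ 4) / W ^ 2 with hq
  have hDW : Δk M a r ≤ W := by unfold Δk; nlinarith
  obtain ⟨w, hw⟩ : ∃ w, w = z + r * y / W := ⟨_, rfl⟩
  have hz : z = w - r / W * y := by rw [hw]; ring
  have c1 : Δk M a r * (r / W) ^ 2 ≤ 1 := by
    rw [div_pow, ← mul_div_assoc, div_le_one (by positivity), sq W]
    have : r ^ 2 ≤ W := by nlinarith [sq_nonneg a]
    gcongr
  have c2 : 7 - 8 * (r - r₁) * (r / W) ≤ 20 * q := by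
    have : 8 * (r - 3 * M) * (r / W) ≤ 8 * (r - r₁) * (r / W) := by
      have : 0 ≤ r / W := by positivity
      gcongr
    refine le_trans (sub_le_sub_left this 7) ?_
    have e : 20 * q - (7 - 8 * (r - 3 * M) * (r / W)) =
      (20 * (2 * M * r ^ 3 + r ^ 2 * a ^ 2 - 4 * M * r * a ^ 2 + a ^ 4)
        - (7 * a ^ 2 - r ^ 2 + 24 * M * r) * W) / W ^ 2 := by
      rw [hq]; field_simp; rw [hW]; ring
    rw [← sub_nonneg, e]
    apply div_nonneg _ (by positivity)
    rw [hW]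
    have ha2 : a ^ 2 ≤ r ^ 2 / 10000 := by nlinarith
    have k1 : M * r * a ^ 2 ≤ M * r * (r ^ 2 / 10000) := by gcongr
    have k2 : 0 ≤ M * r * r ^ 2 := by positivity
    have k3 : 0 ≤ r ^ 2 * a ^ 2 := by positivity
    have k4 : 0 ≤ a ^ 4 := by positivity
    have k5 : 0 ≤ r ^ 4 := by positivity
    nlinarith
  rw [← hw, hz]
  -- What remains uses only `c1`, `c2`, `hD1` and the signs of `A` and `Δ`; with opaque atoms the
  -- arithmetic is linear in the squares below.
  clear_value q
  generalize r / W = c at *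
  generalize Δk M a r = D at *
  have t1 : (1 / 2) * D * (w - c * y) ^ 2 ≤ D * w ^ 2 + y ^ 2 := by
    have : D * c ^ 2 * y ^ 2 ≤ 1 * y ^ 2 := by gcongr
    linarith [mul_nonneg hD0.le (sq_nonneg (w + c * y))]
  have t2 : 8 * (r - r₁) * (y * w) ≤ 16 * (D * w ^ 2) + y ^ 2 := by
    linarith [mul_le_mul_of_nonneg_right hD1 (sq_nonneg w), sq_nonneg (4 * (r - r₁) * w - y)]
  have t3 : (7 - 8 * (r - r₁) * c) * y ^ 2 ≤ 20 * q * y ^ 2 := by gcongr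
  have t4 : 0 ≤ D * w ^ 2 := by positivity
  linarith

/-! ### Derivatives along radial rays and the two momenta -/

lemma isOpen_ext (M a : ℝ) : IsOpen (ext M a) := by
  have h1 : Continuous fun x : V4 => x 1 := continuous_apply 1
  have h2 : Continuous fun x : V4 => x 2 := continuous_apply 2
  exact (isOpen_lt continuous_const h1).inter
    ((isOpen_lt continuous_const h2).inter (isOpen_lt h2 continuous_const))

lemma update_pt (t r s : ℝ) (y : ℝ × ℝ) : Function.update (pt t (r, y)) 1 s = pt t (s, y) := by
  ext i
  fin_cases i <;> simp [pt, Function.update]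

lemma continuous_pt (t : ℝ) : Continuous (pt t) := by
  refine continuous_pi fun i => ?_
  fin_cases i <;> simp [pt] <;> fun_prop

section
variable {M a : ℝ} {ψ : V4 → ℝ}

lemma hasDerivAt_ray (hψ : ContDiffOn ℝ (⊤ : ℕ∞) ψ (ext M a)) {t r : ℝ} {y : ℝ × ℝ}
    (hr : pt t (r, y) ∈ ext M a) :
    HasDerivAt (fun s => ψ (pt t (s, y))) (pd 1 ψ (pt t (r, y))) r := by
  have hd : DifferentiableAt ℝ ψ (pt t (r, y)) :=
    (hψ.contDiffAt ((isOpen_ext M a).mem_nhds hr)).differentiableAt (by simp)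
  have hu := hasDerivAt_update (𝕜 := ℝ) (pt t (r, y)) 1 r
  have he : Function.update (pt t (r, y)) 1 r = pt t (r, y) := update_pt t r r y
  have h := HasFDerivAt.comp_hasDerivAt r (by rw [he]; exact hd.hasFDerivAt) hu
  have h' : HasDerivAt (fun s => ψ (pt t (s, y))) (fderiv ℝ ψ (pt t (r, y)) (Pi.single 1 1)) r := by
    refine h.congr_of_eventuallyEq (Eventually.of_forall fun s => ?_)
    simp [update_pt]
  have : pd 1 ψ (pt t (r, y)) = deriv (fun s => ψ (pt t (s, y))) r := by
    simp only [pd, update_pt]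
    rfl
  rw [this]
  exact h'.differentiableAt.hasDerivAt

lemma continuousOn_pd_one (hψ : ContDiffOn ℝ (⊤ : ℕ∞) ψ (ext M a)) :
    ContinuousOn (pd 1 ψ) (ext M a) := by
  have h := (hψ.continuousOn_fderiv_of_isOpen (isOpen_ext M a) (by simp)).clm_apply
    (continuousOn_const (c := (Pi.single 1 1 : V4)))
  refine h.congr fun x hx => ?_
  have hd : DifferentiableAt ℝ ψ x :=
    (hψ.contDiffAt ((isOpen_ext M a).mem_nhds hx)).differentiableAt (by simp)
  have hu := hasDerivAt_update (𝕜 := ℝ) x 1 (x 1)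
  exact (HasFDerivAt.comp_hasDerivAt (x 1)
    (by rw [Function.update_eq_self]; exact hd.hasFDerivAt) hu).deriv

lemma momentum_eq {t : ℝ} {p : ℝ × ℝ × ℝ} (χ : ℝ → ℝ) (hΔ : Δk M a p.1 ≠ 0)
    (hs : Real.sin p.2.1 ≠ 0) :
    momentum M a (Tchi M a χ) ψ 0 (pt t p) =
      angPart M a (χ p.1 * ωH M a) p.1 p.2.1 (pd 0 ψ (pt t p)) (pd 2 ψ (pt t p))
        (pd 3 ψ (pt t p)) + (1 / 2) * Δk M a p.1 * pd 1 ψ (pt t p) ^ 2 := by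
  have e1 : pt t p 1 = p.1 := rfl
  have e2 : pt t p 2 = p.2.1 := rfl
  simp only [momentum, angPart, Fin.sum_univ_four, Tchi, Ginv, e1, e2]
  simp
  field_simp
  ring

lemma pd_zeroFn (i : Fin 4) (x : V4) : pd i zeroFn x = 0 := by simp [pd, zeroFn]

/-- No differentiability is needed: the factor is constant along the curve, and `deriv` of a
constant multiple of a non-differentiable function is consistently `0`. -/
lemma pd_utilde {i : Fin 4} (hi : i ≠ 1) (x : V4) :
    pd i (utilde a ψ) x = Real.sqrt (x 1 ^ 2 + a ^ 2) * pd i ψ x := by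
  simp only [pd, utilde, Function.update_of_ne hi.symm]
  exact deriv_const_mul_field _

lemma pd_one_utilde (hψ : ContDiffOn ℝ (⊤ : ℕ∞) ψ (ext M a)) {t : ℝ} {p : ℝ × ℝ × ℝ}
    (hr : pt t p ∈ ext M a) (h0 : 0 < p.1) :
    pd 1 (utilde a ψ) (pt t p) = Real.sqrt (p.1 ^ 2 + a ^ 2) *
      (pd 1 ψ (pt t p) + p.1 * ψ (pt t p) / (p.1 ^ 2 + a ^ 2)) := by
  obtain ⟨r, y⟩ := p
  have h0 : 0 < r := h0
  have hW : 0 < r ^ 2 + a ^ 2 := by positivity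
  have h1 := hasDerivAt_ray hψ hr
  have h2 : HasDerivAt (fun s => Real.sqrt (s ^ 2 + a ^ 2))
      (r / Real.sqrt (r ^ 2 + a ^ 2)) r := by
    have := (((hasDerivAt_pow 2 r).add_const (a ^ 2))).sqrt hW.ne'
    convert this using 1
    simp
    field_simp
  have h3 := (h2.mul h1).deriv
  have : pd 1 (utilde a ψ) (pt t (r, y)) =
      deriv ((fun s => Real.sqrt (s ^ 2 + a ^ 2)) * fun s => ψ (pt t (s, y))) r := by
    simp only [pd, utilde, update_pt]
    rfl
  rw [this, h3]
  have hs : Real.sqrt (r ^ 2 + a ^ 2) ≠ 0 := (Real.sqrt_pos.2 hW).ne'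
  have hs2 := Real.sq_sqrt hW.le
  simp only
  field_simp
  rw [hs2]
  ring

lemma tmomentum_eq (hψ : ContDiffOn ℝ (⊤ : ℕ∞) ψ (ext M a)) {t : ℝ} {p : ℝ × ℝ × ℝ}
    (hr : pt t p ∈ ext M a) (h0 : 0 < p.1) (χ : ℝ → ℝ) (hΔ : Δk M a p.1 ≠ 0)
    (hs : Real.sin p.2.1 ≠ 0) :
    tmomentum M a (Tchi M a χ) zeroFn (utilde a ψ) 0 (pt t p) * ((p.1 ^ 2 + a ^ 2) / Δk M a p.1) =
      angPart M a (χ p.1 * ωH M a) p.1 p.2.1 (pd 0 ψ (pt t p)) (pd 2 ψ (pt t p))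
        (pd 3 ψ (pt t p)) +
      (1 / 2) * Δk M a p.1 *
        (pd 1 ψ (pt t p) + p.1 * ψ (pt t p) / (p.1 ^ 2 + a ^ 2)) ^ 2 +
      (1 / 2) * ((2 * M * p.1 ^ 3 + p.1 ^ 2 * a ^ 2 - 4 * M * p.1 * a ^ 2 + a ^ 4) /
        (p.1 ^ 2 + a ^ 2) ^ 2) * ψ (pt t p) ^ 2 := by
  have e1 : pt t p 1 = p.1 := rfl
  have e2 : pt t p 2 = p.2.1 := rfl
  have hW : 0 < p.1 ^ 2 + a ^ 2 := by positivity
  have f0 := pd_utilde (a := a) (ψ := ψ) (i := 0) (by decide) (pt t p)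
  have f2 := pd_utilde (a := a) (ψ := ψ) (i := 2) (by decide) (pt t p)
  have f3 := pd_utilde (a := a) (ψ := ψ) (i := 3) (by decide) (pt t p)
  have f1 := pd_one_utilde hψ hr h0
  have fu : utilde a ψ (pt t p) = Real.sqrt (p.1 ^ 2 + a ^ 2) * ψ (pt t p) := rfl
  rw [e1] at f0 f2 f3
  have fz : zeroFn (pt t p) = 0 := rfl
  simp only [tmomentum, angPart, Fin.sum_univ_four, Tchi, Gtilde, tpd, e1, e2, pd_zeroFn, fz,
    f0, f1, f2, f3, fu, VQ, Vpot]
  have hs2 := Real.sq_sqrt hW.le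
  generalize Real.sqrt (p.1 ^ 2 + a ^ 2) = w at *
  generalize pd 1 ψ (pt t p) + p.1 * ψ (pt t p) / (p.1 ^ 2 + a ^ 2) = Y
  simp
  have hw : w ≠ 0 := by rintro rfl; simp at hs2; linarith
  rw [← hs2]
  field_simp
  ring

/-- The difference of the radial and zeroth-order parts of the two energy densities is the exact
derivative of `(1/2) (Δ r / (r² + a²)) ψ²`. -/
lemma hasDerivAt_boundary (hψ : ContDiffOn ℝ (⊤ : ℕ∞) ψ (ext M a)) {t r : ℝ} {y : ℝ × ℝ}
    (hr : pt t (r, y) ∈ ext M a) (h0 : 0 < r) :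
    HasDerivAt (fun s => (1 / 2) * (Δk M a s * s / (s ^ 2 + a ^ 2)) * ψ (pt t (s, y)) ^ 2)
      (((1 / 2) * Δk M a r *
        (pd 1 ψ (pt t (r, y)) + r * ψ (pt t (r, y)) / (r ^ 2 + a ^ 2)) ^ 2 +
      (1 / 2) * ((2 * M * r ^ 3 + r ^ 2 * a ^ 2 - 4 * M * r * a ^ 2 + a ^ 4) /
        (r ^ 2 + a ^ 2) ^ 2) * ψ (pt t (r, y)) ^ 2) -
        (1 / 2) * Δk M a r * pd 1 ψ (pt t (r, y)) ^ 2) r := by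
  have hW : r ^ 2 + a ^ 2 ≠ 0 := by positivity
  have h1 := hasDerivAt_ray hψ hr
  have hD : HasDerivAt (fun s => Δk M a s) (2 * r - 2 * M) r := by
    have := (((hasDerivAt_pow 2 r).sub ((hasDerivAt_id r).const_mul (2 * M))).add_const (a ^ 2))
    exact this.congr_deriv (by simp)
  have hq := ((hD.mul (hasDerivAt_id r)).div ((hasDerivAt_pow 2 r).add_const (a ^ 2)) hW).const_mul
    (1 / 2 : ℝ)
  have := hq.mul (h1.pow 2)
  refine this.congr_deriv ?_
  simp [Δk]
  field_simp
  ring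

end

/-! ### Integration over radial shells -/

lemma setIntegral_slab {S : Set ℝ} {B : Set (ℝ × ℝ)} {f : ℝ × ℝ × ℝ → ℝ}
    (hf : IntegrableOn f (S ×ˢ B)) :
    ∫ p in S ×ˢ B, f p = ∫ y in B, ∫ r in S, f (r, y) := by
  rw [IntegrableOn, Measure.volume_eq_prod, ← Measure.prod_restrict] at hf
  rw [Measure.volume_eq_prod, ← Measure.prod_restrict]
  exact integral_prod_symm f hf

lemma ae_integrableOn_slab {S : Set ℝ} {B : Set (ℝ × ℝ)} {f : ℝ × ℝ × ℝ → ℝ}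
    (hf : IntegrableOn f (S ×ˢ B)) :
    ∀ᵐ y ∂(volume.restrict B), IntegrableOn (fun r => f (r, y)) S := by
  rw [IntegrableOn, Measure.volume_eq_prod, ← Measure.prod_restrict] at hf
  exact hf.prod_left_ae

section
variable {M a : ℝ} {ψ : V4 → ℝ} {χ : ℝ → ℝ}

/-- Part (1). On almost every radial ray the difference of the two energy densities is the
derivative of `(1/2) (Δ r / (r² + a²)) ψ²`, a function bounded by `(r - r₊) ψ²`, so its integral
vanishes. -/
lemma energy_eq_tenergy (hM : 0 < M) (ha : |a| ≤ M / 100)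
    (hψ : ContDiffOn ℝ (⊤ : ℕ∞) ψ (ext M a)) (t : ℝ)
    (hE : energyIntegrable M a (Tchi M a χ) ψ t)
    (hT : tenergyIntegrable M a (Tchi M a χ) zeroFn (utilde a ψ) t)
    (hL : IntegrableOn (fun p => (ψ (pt t p)) ^ 2 * Real.sin p.2.1) (sliceSet M a)) :
    energy M a (Tchi M a χ) ψ t = tenergy M a (Tchi M a χ) zeroFn (utilde a ψ) t := by
  have hR : 0 < rplus M a := lt_of_lt_of_le hM (rplus_facts hM ha).1
  have hsub := hT.sub hE
  rw [eq_comm, ← sub_eq_zero, tenergy, energy, ← integral_sub hT hE]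
  unfold sliceSet at hsub hL ⊢
  refine (setIntegral_slab hsub).trans (integral_eq_zero_of_ae ?_)
  filter_upwards [ae_integrableOn_slab hsub, ae_integrableOn_slab hL,
    ae_restrict_mem (measurableSet_Ioo.prod measurableSet_Ioo)] with y hy1 hy2 hyB
  have hs : 0 < Real.sin y.1 := Real.sin_pos_of_mem_Ioo hyB.1
  have hmem : ∀ r, rplus M a < r → pt t (r, y) ∈ ext M a := fun r hr =>
    ⟨hr, hyB.1.1, hyB.1.2⟩
  refine integral_Ioi_deriv_eq_zero (f := fun r => ψ (pt t (r, y)) ^ 2 * Real.sin y.1)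
    (F := fun s => (1 / 2) * (Δk M a s * s / (s ^ 2 + a ^ 2)) * ψ (pt t (s, y)) ^ 2 *
      Real.sin y.1) ?_ hy1 hy2 ?_
  · intro r hr
    have hm := hmem r hr
    have hΔ := (Δk_pos hM ha hr).ne'
    refine ((hasDerivAt_boundary hψ hm (hR.trans hr)).mul_const (Real.sin y.1)).congr_deriv ?_
    have e1 := tmomentum_eq (p := (r, y)) hψ hm (hR.trans hr) χ hΔ hs.ne'
    have e2 := momentum_eq (ψ := ψ) (t := t) (p := (r, y)) χ hΔ hs.ne'
    simp only [Pi.sub_apply] at e1 e2 ⊢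
    rw [mul_right_comm _ (Real.sin y.1), e1, e2]
    ring
  · intro r hr
    have h0 := hR.trans hr
    have hΔ := Δk_pos hM ha hr
    have hk := Δk_mul_le hM ha hr
    have hk0 : 0 ≤ Δk M a r * r / (r ^ 2 + a ^ 2) := by positivity
    rw [abs_of_nonneg (by positivity), ← mul_assoc]
    gcongr
    linarith

/-- Part (2): `pointwise_hardy` is integrated over the shell; the integral of the total derivative
`4 ∂_r((r - r₁) ψ²)` is a nonnegative boundary term at `r₂`, and may be added to the left side. -/
lemma local_estimate (hM : 0 < M) (ha : |a| ≤ M / 100) (hχ : IsCutoff M χ)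
    (hψ : ContDiffOn ℝ (⊤ : ℕ∞) ψ (ext M a)) (t : ℝ)
    (hE : energyIntegrable M a (Tchi M a χ) ψ t)
    (hT : tenergyIntegrable M a (Tchi M a χ) zeroFn (utilde a ψ) t)
    (hL : IntegrableOn (fun p => (ψ (pt t p)) ^ 2 * Real.sin p.2.1) (sliceSet M a))
    {r₁ r₂ : ℝ} (h1 : rplus M a < r₁) (h12 : r₁ < r₂) (h3 : r₁ < 3 * M) :
    (∫ p in Set.Ioo r₁ r₂ ×ˢ Set.Ioo 0 Real.pi ×ˢ Set.Ioo 0 (2 * Real.pi),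
        (|momentum M a (Tchi M a χ) ψ 0 (pt t p)| + (ψ (pt t p)) ^ 2) * Real.sin p.2.1) ≤
      40 * ∫ p in Set.Ioo r₁ r₂ ×ˢ Set.Ioo 0 Real.pi ×ˢ Set.Ioo 0 (2 * Real.pi),
        tmomentum M a (Tchi M a χ) zeroFn (utilde a ψ) 0 (pt t p) *
          Real.sin p.2.1 * ((p.1 ^ 2 + a ^ 2) / Δk M a p.1) := by
  have hR : 0 < rplus M a := lt_of_lt_of_le hM (rplus_facts hM ha).1
  set B : Set (ℝ × ℝ) := Set.Ioo 0 Real.pi ×ˢ Set.Ioo 0 (2 * Real.pi) with hB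
  set S := Set.Ioo r₁ r₂ ×ˢ B with hS
  have hSm : MeasurableSet S :=
    measurableSet_Ioo.prod (measurableSet_Ioo.prod measurableSet_Ioo)
  have hsub : S ⊆ sliceSet M a :=
    Set.prod_mono (fun r hr => h1.trans hr.1) subset_rfl
  have hE' := IntegrableOn.mono_set hE hsub
  have hT' := IntegrableOn.mono_set hT hsub
  have hL' := hL.mono_set hsub
  have hmemr : ∀ r, ∀ y ∈ B, rplus M a < r → pt t (r, y) ∈ ext M a := fun r y hy hr =>
    ⟨hr, hy.1.1, hy.1.2⟩
  have hmem : ∀ p ∈ S, pt t p ∈ ext M a := fun p hp => hmemr p.1 p.2 hp.2 (h1.trans hp.1.1)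
  have hsin : ∀ p ∈ S, 0 < Real.sin p.2.1 := fun p hp => Real.sin_pos_of_mem_Ioo hp.2.1
  have hmom : ∀ p ∈ S, momentum M a (Tchi M a χ) ψ 0 (pt t p) =
      angPart M a (χ p.1 * ωH M a) p.1 p.2.1 (pd 0 ψ (pt t p)) (pd 2 ψ (pt t p))
        (pd 3 ψ (pt t p)) + (1 / 2) * Δk M a p.1 * pd 1 ψ (pt t p) ^ 2 := fun p hp =>
    momentum_eq χ (Δk_pos hM ha (h1.trans hp.1.1)).ne' (hsin p hp).ne'
  have hang : ∀ p ∈ S, 0 ≤ angPart M a (χ p.1 * ωH M a) p.1 p.2.1 (pd 0 ψ (pt t p))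
      (pd 2 ψ (pt t p)) (pd 3 ψ (pt t p)) := fun p hp =>
    angPart_nonneg hM ha (h1.trans hp.1.1) (hsin p hp) hχ _ _ _
  have hmom0 : ∀ p ∈ S, 0 ≤ momentum M a (Tchi M a χ) ψ 0 (pt t p) := fun p hp => by
    have := Δk_pos hM ha (h1.trans hp.1.1)
    have := hang p hp
    rw [hmom p hp]
    positivity
  -- The radial derivative of `(r - r₁) ψ²`, weighted by `sin θ`.
  let H : ℝ × ℝ × ℝ → ℝ := fun p =>
    (ψ (pt t p) ^ 2 + 2 * (p.1 - r₁) * (ψ (pt t p) * pd 1 ψ (pt t p))) * Real.sin p.2.1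
  have hψc : ContinuousOn (fun p => ψ (pt t p)) S :=
    hψ.continuousOn.comp (continuous_pt t).continuousOn hmem
  have hpc : ContinuousOn (fun p => pd 1 ψ (pt t p)) S :=
    (continuousOn_pd_one hψ).comp (continuous_pt t).continuousOn hmem
  have hHc : ContinuousOn H S :=
    ((hψc.pow 2).add ((by fun_prop : Continuous fun p : ℝ × ℝ × ℝ =>
      2 * (p.1 - r₁)).continuousOn.mul (hψc.mul hpc))).mul
      (by fun_prop : Continuous fun p : ℝ × ℝ × ℝ => Real.sin p.2.1).continuousOn
  have hLint : IntegrableOn (fun p => (|momentum M a (Tchi M a χ) ψ 0 (pt t p)| +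
      (ψ (pt t p)) ^ 2) * Real.sin p.2.1) S := by
    refine (hE'.add hL').congr_fun (fun p hp => ?_) hSm
    simp only [Pi.add_apply, abs_of_nonneg (hmom0 p hp)]
    ring
  have hHint : IntegrableOn H S := by
    -- `|2 (r - r₁) ψ ∂_rψ| ≤ ψ² + Δ (∂_rψ)²`, because `(r - r₁)² ≤ Δ`.
    refine Integrable.mono' (hLint.const_mul 2) (hHc.aestronglyMeasurable hSm) ?_
    refine (ae_restrict_iff' hSm).2 (Eventually.of_forall fun p hp => ?_)
    have hs := hsin p hp
    have hr := h1.trans hp.1.1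
    have hD : (p.1 - r₁) ^ 2 ≤ Δk M a p.1 := by
      nlinarith [sq_sub_rplus_le hM ha hr, sub_pos.2 hp.1.1]
    rw [Real.norm_eq_abs, abs_mul, abs_of_pos hs]
    refine (mul_le_mul_of_nonneg_right ?_ hs.le).trans_eq (mul_assoc _ _ _)
    rw [abs_of_nonneg (hmom0 p hp), hmom p hp]
    have := hang p hp
    have k := mul_le_mul_of_nonneg_right hD (sq_nonneg (pd 1 ψ (pt t p)))
    generalize pd 1 ψ (pt t p) = z at *
    generalize ψ (pt t p) = y at *
    rw [abs_le]
    constructor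
    · linarith [sq_nonneg (y + (p.1 - r₁) * z), sq_nonneg y]
    · linarith [sq_nonneg (y - (p.1 - r₁) * z), sq_nonneg y]
  have hHnonneg : 0 ≤ ∫ p in S, H p := by
    rw [setIntegral_slab hHint]
    refine setIntegral_nonneg (measurableSet_Ioo.prod measurableSet_Ioo) fun y hy => ?_
    have hs : 0 < Real.sin y.1 := Real.sin_pos_of_mem_Ioo hy.1
    have hm : ∀ r ∈ Set.uIcc r₁ r₂, pt t (r, y) ∈ ext M a := fun r hr => by
      rw [Set.uIcc_of_le h12.le] at hr
      exact hmemr r y hy (h1.trans_le hr.1)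
    have hcpt : ContinuousOn (fun r : ℝ => pt t (r, y)) (Set.uIcc r₁ r₂) :=
      ((continuous_pt t).comp (by fun_prop)).continuousOn
    have hc : ContinuousOn (fun r => H (r, y)) (Set.uIcc r₁ r₂) := by
      have c1 : ContinuousOn (fun r => ψ (pt t (r, y))) (Set.uIcc r₁ r₂) :=
        hψ.continuousOn.comp hcpt hm
      have c2 : ContinuousOn (fun r => pd 1 ψ (pt t (r, y))) (Set.uIcc r₁ r₂) :=
        (continuousOn_pd_one hψ).comp hcpt hm
      exact ((c1.pow 2).add ((by fun_prop : Continuous fun r : ℝ =>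
        2 * (r - r₁)).continuousOn.mul (c1.mul c2))).mul
        (continuousOn_const (c := Real.sin y.1))
    have hd : ∀ r ∈ Set.uIcc r₁ r₂,
        HasDerivAt (fun s => (s - r₁) * ψ (pt t (s, y)) ^ 2 * Real.sin y.1) (H (r, y)) r := by
      intro r hr
      refine ((((hasDerivAt_id r).sub_const r₁).mul
        ((hasDerivAt_ray hψ (hm r hr)).pow 2)).mul_const (Real.sin y.1)).congr_deriv ?_
      simp [H]
      exact Or.inl (by ring)
    rw [← integral_Ioc_eq_integral_Ioo, ← intervalIntegral.integral_of_le h12.le,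
      intervalIntegral.integral_eq_sub_of_hasDerivAt hd hc.intervalIntegrable]
    have := sub_pos.2 h12
    simp only [sub_self, zero_mul, sub_zero]
    positivity
  -- The constant `4` is the multiple of the Hardy term used in `pointwise_hardy`.
  calc _ ≤ (∫ p in S, (|momentum M a (Tchi M a χ) ψ 0 (pt t p)| +
        (ψ (pt t p)) ^ 2) * Real.sin p.2.1) + 4 * ∫ p in S, H p := by linarith
    _ = ∫ p in S, ((|momentum M a (Tchi M a χ) ψ 0 (pt t p)| +
        (ψ (pt t p)) ^ 2) * Real.sin p.2.1 + 4 * H p) := by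
      rw [integral_add hLint (hHint.const_mul 4), integral_const_mul]
    _ ≤ ∫ p in S, 40 * (tmomentum M a (Tchi M a χ) zeroFn (utilde a ψ) 0 (pt t p) *
          Real.sin p.2.1 * ((p.1 ^ 2 + a ^ 2) / Δk M a p.1)) := by
      refine setIntegral_mono_on (hLint.add (hHint.const_mul 4)) (hT'.const_mul 40) hSm
        fun p hp => ?_
      have hr := h1.trans hp.1.1
      have hs := hsin p hp
      have key := mul_le_mul_of_nonneg_right (pointwise_hardy (y := ψ (pt t p)) hM ha h1 hp.1.1 h3
        (hang p hp) (pd 1 ψ (pt t p))) hs.le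
      rw [mul_right_comm _ (Real.sin _),
        tmomentum_eq hψ (hmem p hp) (hR.trans hr) χ (Δk_pos hM ha hr).ne' hs.ne',
        abs_of_nonneg (hmom0 p hp), hmom p hp]
      dsimp only [H]
      linarith
    _ = _ := integral_const_mul _ _

end

/-- **Lemma 4.3 (Relation between the energies of ψ and ũ).** -/
theorem energy_relation (M : ℝ) (hM : 0 < M) (χ : ℝ → ℝ) (hχ : IsCutoff M χ) :
    ∃ abar C : ℝ, 0 < abar ∧ abar ≤ M ∧ 0 < C ∧
      ∀ a : ℝ, |a| ≤ abar →
        ∀ ψ : V4 → ℝ, ContDiffOn ℝ (⊤ : ℕ∞) ψ (ext M a) →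
          (∀ t : ℝ, energyIntegrable M a (Tchi M a χ) ψ t) →
          (∀ t : ℝ, tenergyIntegrable M a (Tchi M a χ) zeroFn (utilde a ψ) t) →
          (∀ t : ℝ, MeasureTheory.IntegrableOn
            (fun p => (ψ (pt t p)) ^ 2 * Real.sin p.2.1) (sliceSet M a)) →
          -- decay of ψ, r∂_rψ, r∂_tψ as r → ∞ on each constant-t slice
          (∀ t θ φ : ℝ, θ ∈ Set.Ioo 0 Real.pi →
            Filter.Tendsto (fun r => ψ ![t, r, θ, φ]) Filter.atTop (nhds 0) ∧
            Filter.Tendsto (fun r => r * pd 1 ψ ![t, r, θ, φ]) Filter.atTop (nhds 0) ∧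
            Filter.Tendsto (fun r => r * pd 0 ψ ![t, r, θ, φ]) Filter.atTop (nhds 0)) →
            -- (1) global identity
            (∀ t : ℝ,
              energy M a (Tchi M a χ) ψ t = tenergy M a (Tchi M a χ) zeroFn (utilde a ψ) t) ∧
            -- (2) local estimate
            (∀ r₁ r₂ : ℝ, rplus M a < r₁ → r₁ < r₂ →
              rstar M a r₁ < -1 → 1 < rstar M a r₂ →
                ∀ t : ℝ,
                  (∫ p in Set.Ioo r₁ r₂ ×ˢ Set.Ioo 0 Real.pi ×ˢ Set.Ioo 0 (2 * Real.pi),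
                      (|momentum M a (Tchi M a χ) ψ 0 (pt t p)| + (ψ (pt t p)) ^ 2) *
                        Real.sin p.2.1) ≤
                    C * ∫ p in Set.Ioo r₁ r₂ ×ˢ Set.Ioo 0 Real.pi ×ˢ Set.Ioo 0 (2 * Real.pi),
                        tmomentum M a (Tchi M a χ) zeroFn (utilde a ψ) 0 (pt t p) *
                          Real.sin p.2.1 * ((p.1 ^ 2 + a ^ 2) / Δk M a p.1)) := by
  refine ⟨M / 100, 40, by positivity, by linarith, by norm_num, ?_⟩
  intro a ha ψ hψ hE hT hL _
  exact ⟨fun t => energy_eq_tenergy hM ha hψ t (hE t) (hT t) (hL t),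
    fun r₁ r₂ h1 h12 hs1 _ t => local_estimate hM ha hχ hψ t (hE t) (hT t) (hL t) h1 h12
      (lt_of_rstar_lt hM ha hs1)⟩

end KerrPaper
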